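/- Let P ⊂ ℝ^n be a compact polytope with nonempty interior given by a non-redundant description with pairwise distinct primitive normal vectors v_1, …, v_m ∈ ℤ^n spanning ℝ^n, and let u be a point of the interior of P. If the generalized leading term equation at u admits a solution, then u belongs to Trop(P, w) for every nonzero lattice vector w ∈ ℤ^n. -/

import Mathlib

open scoped Classical

noncomputable section

/-- Integer inner product `⟨w, v⟩ = ∑ i, w i * v i` on `ℤ^n`. -/
def zdot {n : ℕ} (w v : Fin n → ℤ) : ℤ := ∑ i, w i * v i

/-- A lattice vector is primitive if the gcd of its entries is `1`. -/
def Primitive {n : ℕ} (w : Fin n → ℤ) : Prop := Finset.univ.gcd w = 1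

/-- The affine function `l_j(u) = ⟨u, v_j⟩ - λ_j`. -/
def lf {n m : ℕ} (v : Fin m → Fin n → ℤ) (lam : Fin m → ℝ) (j : Fin m) (u : Fin n → ℝ) : ℝ :=
  (∑ i, u i * (v j i : ℝ)) - lam j

/-- The polytope `P = {u : l_j(u) ≥ 0 for all j}`. -/
def Pset {n m : ℕ} (v : Fin m → Fin n → ℤ) (lam : Fin m → ℝ) : Set (Fin n → ℝ) :=
  {u | ∀ j, 0 ≤ lf v lam j u}

/-- The tropicalization of `P` relative to the lattice vector `w`: the set of points at which
the minimum of `{l_j(u) : ⟨w, v_j⟩ ≠ 0}` is attained by at least two distinct indices. -/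
def TropRel {n m : ℕ} (v : Fin m → Fin n → ℤ) (lam : Fin m → ℝ) (w : Fin n → ℤ) :
    Set (Fin n → ℝ) :=
  {u | ∃ j₁ j₂ : Fin m, j₁ ≠ j₂ ∧ zdot w (v j₁) ≠ 0 ∧ zdot w (v j₂) ≠ 0 ∧
        lf v lam j₁ u = lf v lam j₂ u ∧
        ∀ j : Fin m, zdot w (v j) ≠ 0 → lf v lam j₁ u ≤ lf v lam j u}

/-- The generalized leading term equation at `u` admits a solution: there are nonzero complex
numbers `c_j` and nonzero `y_i` such that for every `j₀` and every lattice vector `w` with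
`⟨w, v_j⟩ = 0` for all `j` with `l_j(u) < l_{j₀}(u)`, one has
`∑_{j : l_j(u) = l_{j₀}(u)} c_j ⟨w, v_j⟩ y^{v_j} = 0`. -/
def GLTESolvable {n m : ℕ} (v : Fin m → Fin n → ℤ) (lam : Fin m → ℝ) (u : Fin n → ℝ) : Prop :=
  ∃ (c : Fin m → ℂ) (y : Fin n → ℂ), (∀ j, c j ≠ 0) ∧ (∀ i, y i ≠ 0) ∧
    ∀ (j₀ : Fin m) (w : Fin n → ℤ),
      (∀ j : Fin m, lf v lam j u < lf v lam j₀ u → zdot w (v j) = 0) →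
      (∑ j ∈ Finset.univ.filter (fun j => lf v lam j u = lf v lam j₀ u),
          c j * (zdot w (v j) : ℂ) * ∏ i, y i ^ (v j i)) = 0

/-- For a compact polytope `P ⊂ ℝ^n` with nonempty interior, given by a
non-redundant description with pairwise distinct primitive normal vectors spanning `ℝ^n`, and a
point `u` of the interior of `P`: if the generalized leading term equation at `u` admits a
solution, then `u ∈ Trop(P, w)` for every nonzero lattice vector `w`. -/
theorem statement2 {n m : ℕ} (hn : 1 ≤ n) (hm : 1 ≤ m)
    (v : Fin m → Fin n → ℤ) (lam : Fin m → ℝ)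
    (hdist : Function.Injective v)
    (hprim : ∀ j, Primitive (v j))
    (hspan : Submodule.span ℝ (Set.range fun j => fun i => ((v j i : ℝ)))
      = (⊤ : Submodule ℝ (Fin n → ℝ)))
    (hcpt : IsCompact (Pset v lam))
    (hint : (interior (Pset v lam)).Nonempty)
    (hnr : ∀ j, ∃ p ∈ Pset v lam, lf v lam j p = 0 ∧ ∀ k, k ≠ j → 0 < lf v lam k p)
    (u : Fin n → ℝ) (hu : u ∈ interior (Pset v lam))
    (hglte : GLTESolvable v lam u) :
    ∀ w : Fin n → ℤ, w ≠ 0 → u ∈ TropRel v lam w := by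
  intro w hw
  obtain ⟨c, y, hc, hy, hsol⟩ := hglte
  have hne : ∃ j, zdot w (v j) ≠ 0 := by
    by_contra hcon
    push Not at hcon
    let φ : (Fin n → ℝ) →ₗ[ℝ] ℝ := ∑ i, (w i : ℝ) • LinearMap.proj i
    have hφ : ∀ x, φ x = ∑ i, (w i : ℝ) * x i := by
      intro x
      simp [φ]
    have hle : Submodule.span ℝ (Set.range fun j => fun i => ((v j i : ℝ)))
        ≤ LinearMap.ker φ := by
      rw [Submodule.span_le]
      rintro _ ⟨j, rfl⟩
      have h := hcon j
      unfold zdot at h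
      simp only [SetLike.mem_coe, LinearMap.mem_ker, hφ]
      exact_mod_cast h
    rw [hspan] at hle
    apply hw
    funext i
    have h1 : φ (Pi.single i 1) = 0 := hle trivial
    rw [hφ] at h1
    simpa [Pi.single_apply] using h1
  obtain ⟨j₁, hj₁, hmin⟩ := Finset.exists_min_image
    (Finset.univ.filter fun j => zdot w (v j) ≠ 0) (fun j => lf v lam j u)
    (by obtain ⟨j, hj⟩ := hne; exact ⟨j, by simpa using hj⟩)
  have hj₁' : zdot w (v j₁) ≠ 0 := by simpa using hj₁
  have hmin' : ∀ j, zdot w (v j) ≠ 0 → lf v lam j₁ u ≤ lf v lam j u :=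
    fun j hj => hmin j (by simpa using hj)
  have hs := hsol j₁ w (fun j hlt => by
    by_contra h
    exact absurd (hmin' j h) (not_le.mpr hlt))
  by_cases hex : ∃ j₂, j₁ ≠ j₂ ∧ zdot w (v j₂) ≠ 0 ∧ lf v lam j₁ u = lf v lam j₂ u
  · obtain ⟨j₂, h12, hz, heq⟩ := hex
    exact ⟨j₁, j₂, h12, hj₁', hz, heq, hmin'⟩
  · exfalso
    push Not at hex
    rw [Finset.sum_eq_single_of_mem j₁ (by simp)] at hs
    · refine mul_ne_zero (mul_ne_zero (hc j₁) (by exact_mod_cast hj₁')) ?_ hs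
      exact Finset.prod_ne_zero_iff.mpr fun i _ => zpow_ne_zero _ (hy i)
    · intro j hj hne'
      have hj' : lf v lam j u = lf v lam j₁ u := by simpa using hj
      have : zdot w (v j) = 0 := by
        by_contra h
        exact hex j hne'.symm h hj'.symm
      simp [this]
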